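/- Let d be a positive even integer and equip ℤ³ with the Mukai pairing ⟨(r,a,s),(r',a',s')⟩ = -r·s' + d·a·a' - s·r'. Let n, c₂, k, l, ℓ₁, ℓ₂ be integers with k + l = n and ℓ₁ + ℓ₂ + k·l·d = c₂, set v₁ = (1, k, k²d/2 - ℓ₁ + 1), v₂ = (1, l, l²d/2 - ℓ₂ + 1), and v = v₁ + v₂. (i) If n²d = 4c₂ - 8, then ⟨v₁,v₁⟩ + ⟨v₂,v₂⟩ + ⟨v₁,v₂⟩ + 2 ≥ ⟨v,v⟩ + 2. (ii) If n²d = 4c₂, then ⟨v₁,v₁⟩ + ⟨v₂,v₂⟩ + ⟨v₁,v₂⟩ + 2 ≥ ⟨v,v⟩ + 4. -/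

import Mathlib

/-- Mukai pairing on ℤ³: ⟨(r,a,s),(r',a',s')⟩ = -r·s' + d·a·a' - s·r'. -/
def mukaiPair (d : ℤ) (v w : ℤ × ℤ × ℤ) : ℤ :=
  -(v.1 * w.2.2) + d * v.2.1 * w.2.1 - v.2.2 * w.1

/-!
Everything rests on the polarization identity
`4 (⟨v₁,v₁⟩ + ⟨v₂,v₂⟩ + ⟨v₁,v₂⟩) = 3 ⟨v₁+v₂,v₁+v₂⟩ + ⟨v₁-v₂,v₁-v₂⟩`.
When `v₁` and `v₂` have the same rank, `v₁ - v₂` has rank `0`, so its square is `d (k - l)² ≥ 0`.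
The square `⟨v,v⟩ = 4c₂ - 8 - n²d` is `0` in case (i) and `-8` in case (ii).
-/

section Pairing

variable (d : ℤ) (v w : ℤ × ℤ × ℤ)

theorem mukaiPair_add_self :
    mukaiPair d (v + w) (v + w) = mukaiPair d v v + 2 * mukaiPair d v w + mukaiPair d w w := by
  simp only [mukaiPair, Prod.fst_add, Prod.snd_add]
  ring

theorem mukaiPair_sub_self :
    mukaiPair d (v - w) (v - w) = mukaiPair d v v - 2 * mukaiPair d v w + mukaiPair d w w := by
  simp only [mukaiPair, Prod.fst_sub, Prod.snd_sub]
  ring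

variable {d v w}

theorem mukaiPair_self_of_rank_eq_zero (hv : v.1 = 0) : mukaiPair d v v = d * v.2.1 ^ 2 := by
  simp only [mukaiPair, hv]
  ring

theorem mukaiPair_sub_self_nonneg_of_rank_eq (hd : 0 ≤ d) (hvw : v.1 = w.1) :
    0 ≤ mukaiPair d (v - w) (v - w) := by
  have rank_sub : (v - w).1 = 0 := sub_eq_zero.mpr hvw
  rw [mukaiPair_self_of_rank_eq_zero rank_sub]
  positivity

end Pairing

/-- The Mukai vector of the rank-one sheaf `I_Z(kH)`, where `Z` is a zero-dimensional subscheme of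
length `ℓ` and `H ^ 2 = d`. The integer division `d / 2` is exact only for even `d`. -/
def rankOneMukaiVector (d k ℓ : ℤ) : ℤ × ℤ × ℤ :=
  (1, k, k ^ 2 * (d / 2) - ℓ + 1)

theorem mukaiPair_rankOneMukaiVector_add_self {d : ℤ} (hd : Even d) (k l ℓ₁ ℓ₂ : ℤ) :
    mukaiPair d (rankOneMukaiVector d k ℓ₁ + rankOneMukaiVector d l ℓ₂)
        (rankOneMukaiVector d k ℓ₁ + rankOneMukaiVector d l ℓ₂) =
      4 * (ℓ₁ + ℓ₂ + k * l * d) - 8 - (k + l) ^ 2 * d := by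
  have two_mul_half : 2 * (d / 2) = d := Int.two_mul_ediv_two_of_even hd
  simp only [mukaiPair, rankOneMukaiVector, Prod.mk_add_mk]
  linear_combination (-2 * (k ^ 2 + l ^ 2)) * two_mul_half

theorem stmt_5_general {d : ℤ} (hd : 0 ≤ d) {v₁ v₂ : ℤ × ℤ × ℤ} (hrank : v₁.1 = v₂.1) :
    3 * mukaiPair d (v₁ + v₂) (v₁ + v₂) ≤
      4 * (mukaiPair d v₁ v₁ + mukaiPair d v₂ v₂ + mukaiPair d v₁ v₂) := by
  have polarization : 4 * (mukaiPair d v₁ v₁ + mukaiPair d v₂ v₂ + mukaiPair d v₁ v₂) =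
      3 * mukaiPair d (v₁ + v₂) (v₁ + v₂) + mukaiPair d (v₁ - v₂) (v₁ - v₂) := by
    rw [mukaiPair_add_self, mukaiPair_sub_self]
    ring
  have sq_sub_nonneg := mukaiPair_sub_self_nonneg_of_rank_eq hd hrank
  linarith

theorem stmt_5 (d : ℤ) (hd : 0 < d) (hde : Even d)
    (n c₂ k l ℓ₁ ℓ₂ : ℤ) (hkl : k + l = n) (hrel : ℓ₁ + ℓ₂ + k * l * d = c₂)
    (v₁ v₂ v : ℤ × ℤ × ℤ)
    (hv₁ : v₁ = (1, k, k ^ 2 * (d / 2) - ℓ₁ + 1))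
    (hv₂ : v₂ = (1, l, l ^ 2 * (d / 2) - ℓ₂ + 1))
    (hv : v = v₁ + v₂) :
    (n ^ 2 * d = 4 * c₂ - 8 →
      mukaiPair d v₁ v₁ + mukaiPair d v₂ v₂ + mukaiPair d v₁ v₂ + 2 ≥
        mukaiPair d v v + 2) ∧
    (n ^ 2 * d = 4 * c₂ →
      mukaiPair d v₁ v₁ + mukaiPair d v₂ v₂ + mukaiPair d v₁ v₂ + 2 ≥
        mukaiPair d v v + 4) := by
  have sq_v : mukaiPair d v v = 4 * c₂ - 8 - n ^ 2 * d := by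
    rw [hv, hv₁, hv₂, ← hkl, ← hrel]
    exact mukaiPair_rankOneMukaiVector_add_self hde k l ℓ₁ ℓ₂
  have sq_v_le : 3 * mukaiPair d v v ≤
      4 * (mukaiPair d v₁ v₁ + mukaiPair d v₂ v₂ + mukaiPair d v₁ v₂) :=
    hv ▸ stmt_5_general hd.le (by rw [hv₁, hv₂])
  constructor <;> intro h <;> linarith
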